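/- Let G be a connected irreducible (twin-free) d-regular loopless multigraph on Fin n whose adjacency matrix A (with A i j = μ i j) has exactly s distinct eigenvalues λ_1 > λ_2 > ⋯ > λ_s, with corresponding eigenspaces E_1, …, E_s. Then there is an injective group homomorphism from Aut(G) into the product, over i = 3, …, s, of the groups of linear isometries of the eigenspaces E_i (i.e. Aut(G) is isomorphic to a subgroup of O(E_3) × ⋯ × O(E_s)). -/

import Mathlib

/-!
A permutation `g` of the vertices acts on `ℝⁿ` by permuting coordinates, and for an automorphism
this action commutes with `A`; hence it restricts to a linear isometry of each eigenspace, which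
gives the homomorphism into `O(E_3) × ⋯ × O(E_s)`.

For injectivity, let `g` act trivially on `E_3, …, E_s`.  The space `E_1` consists of constant
vectors (`apply_eq_of_mem_eigenspace_of_degree_le`), because the vectors `v` in it satisfy
`∑ i j, A i j (v i - v j)² = 2 (d - λ_1) ‖v‖² ≤ 0` and the graph is connected; so `g` acts
trivially on `E_1` as well.  As the eigenspaces span, `g v - v` lies in `E_2` for every `v`.  If
`g x ≠ x`, the choice `v = e_x` makes `e_{g x} - e_x` an eigenvector of `A`, and comparing
coordinates away from `x` and `g x` shows that `x` and `g x` are twins (`twins_of_mem_eigenspace`),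
contradicting irreducibility.
-/

/-- The automorphism group of a loopless multigraph on `Fin n` with multiplicity
function `μ`, as a subgroup of the permutation group. -/
def mgAut (n : ℕ) (μ : Fin n → Fin n → ℕ) : Subgroup (Equiv.Perm (Fin n)) where
  carrier := {g | ∀ i j, μ (g i) (g j) = μ i j}
  one_mem' := fun _ _ => rfl
  mul_mem' := by
    intro a b ha hb i j
    simpa [Equiv.Perm.mul_apply] using (ha (b i) (b j)).trans (hb i j)
  inv_mem' := by
    intro a ha i j
    simpa using (ha (a⁻¹ i) (a⁻¹ j)).symm

/-- The group of isometric bijections of `EuclideanSpace ℝ (Fin k)` mapping the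
set `P` onto itself. -/
noncomputable def isomPreserving (k : ℕ) (P : Set (EuclideanSpace ℝ (Fin k))) :
    Subgroup (EuclideanSpace ℝ (Fin k) ≃ᵢ EuclideanSpace ℝ (Fin k)) where
  carrier := {φ | φ '' P = P}
  one_mem' := by simp
  mul_mem' := by
    intro a b ha hb
    show (a * b) '' P = P
    rw [IsometryEquiv.coe_mul, Set.image_comp, hb, ha]
  inv_mem' := by
    intro a ha
    show ⇑(a⁻¹) '' P = P
    have : ⇑(a⁻¹) = ⇑(a.symm) := rfl
    rw [this, ← ha, Set.image_image]
    simpa using ha.symm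

lemma toEuclideanLin_coord {n : ℕ} (A : Matrix (Fin n) (Fin n) ℝ)
    (v : EuclideanSpace ℝ (Fin n)) (i : Fin n) :
    Matrix.toEuclideanLin A v i = ∑ j, A i j * v j := rfl

lemma mem_eigenspace_iff_coord {n : ℕ} (A : Matrix (Fin n) (Fin n) ℝ) (c : ℝ)
    (v : EuclideanSpace ℝ (Fin n)) :
    v ∈ Module.End.eigenspace (Matrix.toEuclideanLin A) c ↔
      ∀ i, ∑ j, A i j * v j = c * v i := by
  rw [Module.End.mem_eigenspace_iff]
  constructor
  · intro h i
    rw [← toEuclideanLin_coord, h]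
    simp
  · intro h
    ext i
    rw [toEuclideanLin_coord, h i]
    simp

/-- The isometry of `ℝⁿ` permuting coordinates by `g`, so that the basis vector `e_x` is sent to
`e_{g x}`. -/
noncomputable def permIsom {n : ℕ} (g : Equiv.Perm (Fin n)) :
    EuclideanSpace ℝ (Fin n) ≃ₗᵢ[ℝ] EuclideanSpace ℝ (Fin n) :=
  LinearIsometryEquiv.piLpCongrLeft 2 ℝ ℝ g

lemma permIsom_coord {n : ℕ} (g : Equiv.Perm (Fin n)) (v : EuclideanSpace ℝ (Fin n))
    (i : Fin n) : permIsom g v i = v (g.symm i) := rfl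

/-- The action by coordinate permutations of a group of permutations on an invariant subspace
`F`. -/
noncomputable def permRestrict {n : ℕ} (H : Subgroup (Equiv.Perm (Fin n)))
    (F : Submodule ℝ (EuclideanSpace ℝ (Fin n)))
    (hF : ∀ g ∈ H, ∀ v ∈ F, permIsom g v ∈ F) : H →* (F ≃ₗᵢ[ℝ] F) where
  toFun g :=
    { toFun := fun v => ⟨permIsom g.1 v.1, hF g.1 g.2 v.1 v.2⟩
      invFun := fun v => ⟨permIsom g.1⁻¹ v.1, hF _ (H.inv_mem g.2) v.1 v.2⟩
      map_add' := fun v w => by ext; simp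
      map_smul' := fun c v => by ext; simp
      left_inv := fun v => by ext i; exact congrArg v.1 (g.1.symm_apply_apply i)
      right_inv := fun v => by ext i; exact congrArg v.1 (g.1.apply_symm_apply i)
      norm_map' := fun v => (permIsom g.1).norm_map v.1 }
  map_one' := by
    ext v i
    rfl
  map_mul' g h := by
    ext v i
    rfl

lemma permRestrict_coe {n : ℕ} (H : Subgroup (Equiv.Perm (Fin n)))
    (F : Submodule ℝ (EuclideanSpace ℝ (Fin n)))
    (hF : ∀ g ∈ H, ∀ v ∈ F, permIsom g v ∈ F) (g : H) (v : F) :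
    (permRestrict H F hF g v : EuclideanSpace ℝ (Fin n)) = permIsom g.1 v := rfl

lemma permIsom_mem_eigenspace {n : ℕ} {μ : Fin n → Fin n → ℕ}
    {A : Matrix (Fin n) (Fin n) ℝ} (hA : ∀ i j, A i j = (μ i j : ℝ)) (c : ℝ)
    (g : Equiv.Perm (Fin n)) (hg : g ∈ mgAut n μ) (v : EuclideanSpace ℝ (Fin n))
    (hv : v ∈ Module.End.eigenspace (Matrix.toEuclideanLin A) c) :
    permIsom g v ∈ Module.End.eigenspace (Matrix.toEuclideanLin A) c := by
  rw [mem_eigenspace_iff_coord] at hv ⊢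
  intro i
  rw [permIsom_coord, ← hv, ← Equiv.sum_comp g]
  refine Finset.sum_congr rfl fun j _ => ?_
  have h : μ i (g j) = μ (g.symm i) j := by
    have := hg (g.symm i) j
    simpa using this
  rw [permIsom_coord, hA, hA, h]
  simp

/-- In a connected `d`-regular multigraph, an eigenvector for an eigenvalue `c ≥ d` is constant:
the Dirichlet form `∑ i j, A i j (v i - v j)² = 2 (d - c) ∑ i, v i²` has nonnegative terms and a
nonpositive sum. -/
lemma apply_eq_of_mem_eigenspace_of_degree_le {n : ℕ} {μ : Fin n → Fin n → ℕ}
    (hsymm : ∀ i j, μ i j = μ j i)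
    (hconn : ∀ i j : Fin n, Relation.ReflTransGen (fun a b => 0 < μ a b) i j)
    {d : ℕ} (hreg : ∀ i, ∑ j, μ i j = d)
    {A : Matrix (Fin n) (Fin n) ℝ} (hA : ∀ i j, A i j = (μ i j : ℝ))
    {c : ℝ} (hc : (d : ℝ) ≤ c) {v : EuclideanSpace ℝ (Fin n)}
    (hv : v ∈ Module.End.eigenspace (Matrix.toEuclideanLin A) c) (x y : Fin n) :
    v x = v y := by
  rw [mem_eigenspace_iff_coord] at hv
  have hrow : ∀ i, ∑ j, A i j = d := by
    intro i
    simp only [hA]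
    exact_mod_cast hreg i
  have hsq : ∑ i, ∑ j, A i j * v i ^ 2 = d * ∑ i, v i ^ 2 := by
    simp_rw [← Finset.sum_mul, hrow, ← Finset.mul_sum]
  have hsq' : ∑ i, ∑ j, A i j * v j ^ 2 = d * ∑ i, v i ^ 2 := by
    rw [Finset.sum_comm, ← hsq]
    refine Finset.sum_congr rfl fun i _ => Finset.sum_congr rfl fun j _ => ?_
    rw [hA, hA, hsymm]
  have hcross : ∑ i, ∑ j, A i j * (v i * v j) = c * ∑ i, v i ^ 2 := by
    rw [Finset.mul_sum]
    refine Finset.sum_congr rfl fun i _ => ?_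
    calc ∑ j, A i j * (v i * v j) = v i * ∑ j, A i j * v j := by
          rw [Finset.mul_sum]
          exact Finset.sum_congr rfl fun j _ => by ring
      _ = c * v i ^ 2 := by rw [hv]; ring
  have hform : ∑ i, ∑ j, A i j * (v i - v j) ^ 2 = 2 * (d - c) * ∑ i, v i ^ 2 := by
    calc ∑ i, ∑ j, A i j * (v i - v j) ^ 2
        = ∑ i, ∑ j, (A i j * v i ^ 2 + A i j * v j ^ 2 - 2 * (A i j * (v i * v j))) :=
          Finset.sum_congr rfl fun i _ => Finset.sum_congr rfl fun j _ => by ring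
      _ = 2 * (d - c) * ∑ i, v i ^ 2 := by
          simp only [Finset.sum_sub_distrib, Finset.sum_add_distrib, ← Finset.mul_sum]
          rw [hsq, hsq', hcross]
          ring
  have hterm : ∀ i j, 0 ≤ A i j * (v i - v j) ^ 2 := by
    intro i j
    rw [hA]
    positivity
  have hzero : ∑ i, ∑ j, A i j * (v i - v j) ^ 2 = 0 := by
    refine le_antisymm ?_ (Finset.sum_nonneg fun i _ => Finset.sum_nonneg fun j _ => hterm i j)
    rw [hform]
    have : 0 ≤ ∑ i, v i ^ 2 := Finset.sum_nonneg fun i _ => sq_nonneg _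
    nlinarith
  have hedge : ∀ i j, 0 < μ i j → v i = v j := by
    intro i j hij
    rw [Finset.sum_eq_zero_iff_of_nonneg
      fun i _ => Finset.sum_nonneg fun j _ => hterm i j] at hzero
    have h1 := hzero i (Finset.mem_univ i)
    rw [Finset.sum_eq_zero_iff_of_nonneg fun j _ => hterm i j] at h1
    have h2 := h1 j (Finset.mem_univ j)
    have hAij : A i j ≠ 0 := by
      rw [hA]
      exact_mod_cast hij.ne'
    have h3 := (mul_eq_zero.mp h2).resolve_left hAij
    exact sub_eq_zero.mp (pow_eq_zero_iff two_ne_zero |>.mp h3)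
  have hpath := hconn x y
  induction hpath with
  | refl => rfl
  | tail _ hbc ih => exact ih.trans (hedge _ _ hbc)

/-- If `e_y - e_x` is an eigenvector of the adjacency matrix, then `x` and `y` are twins. -/
lemma twins_of_mem_eigenspace {n : ℕ} {μ : Fin n → Fin n → ℕ}
    (hsymm : ∀ i j, μ i j = μ j i)
    {A : Matrix (Fin n) (Fin n) ℝ} (hA : ∀ i j, A i j = (μ i j : ℝ)) {c : ℝ} {x y : Fin n}
    (h : EuclideanSpace.single y (1 : ℝ) - EuclideanSpace.single x 1 ∈
      Module.End.eigenspace (Matrix.toEuclideanLin A) c)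
    {v : Fin n} (hvx : v ≠ x) (hvy : v ≠ y) : μ x v = μ y v := by
  rw [mem_eigenspace_iff_coord] at h
  have hv := h v
  simp [mul_sub, Finset.sum_sub_distrib, hvx, hvy, hA, sub_eq_zero] at hv
  rw [hsymm x, hsymm y]
  exact hv.symm

lemma permIsom_single {n : ℕ} (g : Equiv.Perm (Fin n)) (x : Fin n) :
    permIsom g (EuclideanSpace.single x (1 : ℝ)) = EuclideanSpace.single (g x) 1 := by
  ext i
  simp [permIsom_coord, Equiv.symm_apply_eq]

/-- The vertex degree of a nonempty regular multigraph is an eigenvalue, with the all-ones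
eigenvector. -/
lemma hasEigenvalue_degree {n : ℕ} {μ : Fin n → Fin n → ℕ} {d : ℕ}
    (hreg : ∀ i, ∑ j, μ i j = d)
    {A : Matrix (Fin n) (Fin n) ℝ} (hA : ∀ i j, A i j = (μ i j : ℝ)) (x : Fin n) :
    Module.End.HasEigenvalue (Matrix.toEuclideanLin A) (d : ℝ) := by
  refine Module.End.hasEigenvalue_of_hasEigenvector (x := WithLp.toLp 2 fun _ => (1 : ℝ))
    ⟨(mem_eigenspace_iff_coord _ _ _).mpr fun i => ?_, fun h => ?_⟩
  · simp only [mul_one, hA]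
    exact_mod_cast hreg i
  · have := congrArg (fun w : EuclideanSpace ℝ (Fin n) => w x) h
    simp at this

/-- Let `G` be a connected irreducible `d`-regular loopless multigraph
whose adjacency matrix has exactly `s` distinct eigenvalues `λ_1 > ⋯ > λ_s`, with
eigenspaces `E_1, …, E_s`.  Then `Aut(G)` embeds into
`O(E_3) × ⋯ × O(E_s)`. -/
theorem aut_regular_multigraph_embeds_upper_eigenspaces
    (n : ℕ) (μ : Fin n → Fin n → ℕ)
    (hsymm : ∀ i j, μ i j = μ j i) (hloop : ∀ i, μ i i = 0)
    (hconn : ∀ i j : Fin n, Relation.ReflTransGen (fun a b => 0 < μ a b) i j)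
    (hirr : ¬ ∃ x y : Fin n, x ≠ y ∧ ∀ v : Fin n, v ≠ x → v ≠ y → μ x v = μ y v)
    (d : ℕ) (hreg : ∀ i, ∑ j, μ i j = d)
    (A : Matrix (Fin n) (Fin n) ℝ) (hA : ∀ i j, A i j = (μ i j : ℝ))
    (s : ℕ) (lam : Fin s → ℝ) (hlam : StrictAnti lam)
    (E : Fin s → Submodule ℝ (EuclideanSpace ℝ (Fin n)))
    (hE : ∀ i, E i = Module.End.eigenspace (Matrix.toEuclideanLin A) (lam i))
    (hEne : ∀ i, E i ≠ ⊥)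
    (hdecomp : (⨆ i, E i) = ⊤)
    (hall : ∀ c : ℝ, Module.End.HasEigenvalue (Matrix.toEuclideanLin A) c →
      ∃ i, lam i = c) :
    ∃ φ : mgAut n μ →*
      (∀ j : Fin (s - 2),
        (E ⟨j.val + 2, by have := j.isLt; omega⟩ ≃ₗᵢ[ℝ]
         E ⟨j.val + 2, by have := j.isLt; omega⟩)),
      Function.Injective φ := by
  have hinv : ∀ i, ∀ g ∈ mgAut n μ, ∀ v ∈ E i, permIsom g v ∈ E i := by
    intro i g hg v hv
    rw [hE] at hv ⊢
    exact permIsom_mem_eigenspace hA _ g hg v hv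
  refine ⟨MonoidHom.pi fun j => permRestrict (mgAut n μ) _ (hinv _), ?_⟩
  rw [injective_iff_map_eq_one]
  intro g hg
  have htriv : ∀ (i : Fin s), 2 ≤ i.val → ∀ v ∈ E i, permIsom g.1 v = v := by
    intro i hi v hv
    obtain ⟨i, his⟩ := i
    obtain ⟨k, rfl⟩ : ∃ k, i = k + 2 := ⟨i - 2, by simp at hi; omega⟩
    have h := congrFun hg ⟨k, by omega⟩
    have h' := congrArg (fun f => (f ⟨v, hv⟩).1) h
    exact h'
  by_contra hne
  obtain ⟨x, hx⟩ : ∃ x, g.1 x ≠ x := by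
    by_contra! hfix
    exact hne (Subtype.ext (Equiv.ext hfix))
  obtain ⟨k, hk⟩ := hall d (hasEigenvalue_degree hreg hA x)
  -- The second eigenvalue; when `s = 1` there is none, but then `g v - v = 0` and any value works.
  let c : ℝ := if h : 1 < s then lam ⟨1, h⟩ else 0
  have hmove : ∀ v ∈ ⨆ i, E i,
      permIsom g.1 v - v ∈ Module.End.eigenspace (Matrix.toEuclideanLin A) c := by
    intro v hv
    induction hv using Submodule.iSup_induction' with
    | mem i v hv =>
      obtain ⟨i, his⟩ := i
      match i, his, hv with
      | 0, his, hv =>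
        have hle : (d : ℝ) ≤ lam ⟨0, his⟩ :=
          hk ▸ hlam.antitone (Fin.mk_le_of_le_val (Nat.zero_le _))
        rw [hE] at hv
        have hfix : permIsom g.1 v = v := by
          ext i
          exact apply_eq_of_mem_eigenspace_of_degree_le hsymm hconn hreg hA hle hv _ _
        rw [hfix, sub_self]
        exact zero_mem _
      | 1, his, hv =>
        have hc : c = lam ⟨1, his⟩ := dif_pos his
        rw [hc, ← hE]
        exact sub_mem (hinv _ g.1 g.2 v hv) hv
      | m + 2, his, hv =>
        rw [htriv ⟨m + 2, his⟩ (by simp) v hv, sub_self]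
        exact zero_mem _
    | zero => simp
    | add v w _ _ hv hw =>
      rw [map_add, add_sub_add_comm]
      exact add_mem hv hw
  have hx2 := hmove (EuclideanSpace.single x 1) (hdecomp ▸ Submodule.mem_top)
  rw [permIsom_single] at hx2
  exact hirr ⟨x, g.1 x, hx.symm, fun v hvx hvy => twins_of_mem_eigenspace hsymm hA hx2 hvx hvy⟩
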